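/- arXiv:2103.15080 — 2 statements merged into one kernel-verified Lean document; each statement's English description precedes it below -/
import Mathlib

section
/- Let ν be a σ-finite measure on ℝᵈ with ν({0}) = 0 that is symmetric under negation, i.e. ν(−B) = ν(B) for every Borel set B. Let p, ψ : ℝᵈ → ℝ be measurable and suppose the functions (x,y) ↦ ψ(x)p(x+y), (x,y) ↦ ψ(x)p(x), and (x,y) ↦ p(x)ψ(x+y) are integrable with respect to the product of Lebesgue measure on ℝᵈ and ν. Then ∫_{ℝᵈ} ψ(x) (∫ [p(x+y) − p(x)] ν(dy)) dx = ∫_{ℝᵈ} p(x) (∫ [ψ(x+y) − ψ(x)] ν(dy)) dx. -/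
/-!
Since `ψ x` pulls out of the inner integral, each side is an iterated integral of a function which is
integrable on the product (a difference of two hypotheses), so Fubini writes it as the difference of
two double integrals. The subtracted terms `∬ ψ x * p x` agree. For the others, integrate in `x`
first: translating `x` by `-y` turns `ψ x * p (x + y)` into `ψ (x - y) * p x`, and the symmetry of
`ν` allows `y` to be replaced by `-y`.
-/


open MeasureTheory

/-- Self-adjointness of the nonlocal jump part of the Fokker–Planck operator with
respect to the `L²` pairing, for a symmetric σ-finite Lévy measure `ν`. -/
theorem jump_part_self_adjoint {d : ℕ}
    (ν : Measure (Fin d → ℝ)) [SigmaFinite ν]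
    (hν0 : ν {0} = 0)
    (hν_symm : ∀ B : Set (Fin d → ℝ), MeasurableSet B → ν ((fun y => -y) ⁻¹' B) = ν B)
    (p ψ : (Fin d → ℝ) → ℝ) (hp : Measurable p) (hψ : Measurable ψ)
    (h1 : Integrable (fun q : (Fin d → ℝ) × (Fin d → ℝ) => ψ q.1 * p (q.1 + q.2))
      (volume.prod ν))
    (h2 : Integrable (fun q : (Fin d → ℝ) × (Fin d → ℝ) => ψ q.1 * p q.1)
      (volume.prod ν))
    (h3 : Integrable (fun q : (Fin d → ℝ) × (Fin d → ℝ) => p q.1 * ψ (q.1 + q.2))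
      (volume.prod ν)) :
    ∫ x, ψ x * (∫ y, (p (x + y) - p x) ∂ν) ∂volume
      = ∫ x, p x * (∫ y, (ψ (x + y) - ψ x) ∂ν) ∂volume := by
  have hinv : ν.IsNegInvariant := by
    refine ⟨Measure.ext fun B hB => ?_⟩
    rw [Measure.neg, Measure.map_apply measurable_neg hB]
    exact hν_symm B hB
  have h2' : Integrable (fun q : (Fin d → ℝ) × (Fin d → ℝ) => p q.1 * ψ q.1)
      (volume.prod ν) := by
    simpa only [mul_comm] using h2
  have key : ∫ q : (Fin d → ℝ) × (Fin d → ℝ), ψ q.1 * p (q.1 + q.2) ∂(volume.prod ν)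
      = ∫ q : (Fin d → ℝ) × (Fin d → ℝ), p q.1 * ψ (q.1 + q.2) ∂(volume.prod ν) := by
    rw [integral_prod_symm _ h1, integral_prod_symm _ h3,
      ← integral_neg_eq_self (fun y => ∫ x, p x * ψ (x + y)) ν]
    refine integral_congr_ae (Filter.Eventually.of_forall fun y => ?_)
    have h := integral_add_right_eq_self (μ := (volume : Measure (Fin d → ℝ)))
      (fun x => p x * ψ (x + -y)) y
    simpa only [add_neg_cancel_right, mul_comm] using h
  -- `integral_const_mul` needs no integrability of the inner integrand.
  have side : ∀ f g : (Fin d → ℝ) → ℝ,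
      Integrable (fun q : (Fin d → ℝ) × (Fin d → ℝ) => f q.1 * g (q.1 + q.2)) (volume.prod ν) →
      Integrable (fun q : (Fin d → ℝ) × (Fin d → ℝ) => f q.1 * g q.1) (volume.prod ν) →
      ∫ x, f x * (∫ y, (g (x + y) - g x) ∂ν)
        = (∫ q : (Fin d → ℝ) × (Fin d → ℝ), f q.1 * g (q.1 + q.2) ∂(volume.prod ν))
          - ∫ q : (Fin d → ℝ) × (Fin d → ℝ), f q.1 * g q.1 ∂(volume.prod ν) := by
    intro f g ha hb
    rw [← integral_sub ha hb]
    refine Eq.trans ?_ (integral_prod _ (ha.sub hb)).symm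
    simp only [Pi.sub_apply, ← mul_sub, integral_const_mul]
  rw [side ψ p h1 h2, side p ψ h3 h2', key]
  simp only [mul_comm]
end

section
/- Let r : ℝᵈ → ℝᵈ be C¹, D : ℝᵈ → Matrix (Fin d) (Fin d) ℝ be C² entrywise, and let ν be a σ-finite measure on ℝᵈ with ν({0}) = 0 that is symmetric under negation. Define (Lp)(x) = −div(r p)(x) + (1/2) Σ_{i,j} ∂ᵢ∂ⱼ(Dᵢⱼ p)(x) + ∫ [p(x+y) − p(x)] ν(dy) and (L*ψ)(x) = r(x)⬝∇ψ(x) + (1/2) Σ_{i,j} Dᵢⱼ(x) ∂ᵢ∂ⱼψ(x) + ∫ [ψ(x+y) − ψ(x)] ν(dy). If p : ℝᵈ → ℝ is C² and ψ : ℝᵈ → ℝ is C² with compact support, and the functions (x,y) ↦ ψ(x)p(x+y), (x,y) ↦ ψ(x)p(x), and (x,y) ↦ p(x)ψ(x+y) are integrable with respect to Lebesgue ⊗ ν, and all the integrands below are Lebesgue integrable, then ∫_{ℝᵈ} ψ(x)(Lp)(x) dx = ∫_{ℝᵈ} p(x)(L*ψ)(x) dx. -/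
/-!
The three parts of the operator are treated separately after pairing with `ψ`.

* Drift and diffusion: since `ψ` has compact support, integration by parts holds against any `C¹`
  function without boundary terms (`integral_mul_fderiv_of_hasCompactSupport`). Applied once it
  moves the divergence onto `ψ`; applied twice it turns `ψ ∂ᵢ∂ⱼ(Dᵢⱼ p)` into `(∂ⱼ∂ᵢψ) Dᵢⱼ p`, and
  Schwarz's theorem for the `C²` function `ψ` puts the derivatives in the order used by the adjoint.
* Jumps: by Fubini, translation invariance of Lebesgue measure in `x` and invariance of `ν` under
  `y ↦ -y`, the integral of `p(x) ψ(x + y)` equals that of `ψ(x) p(x + y)`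
  (`integral_prod_shift_comm`); the compensating term `ψ(x) p(x)` is common to both sides.
-/

open MeasureTheory

/-- The Fokker–Planck (forward) operator
`(Lp)(x) = −∇·(r p)(x) + (1/2) Σᵢⱼ ∂ᵢ∂ⱼ(Dᵢⱼ p)(x) + ∫ [p(x+y) − p(x)] ν(dy)`. -/
noncomputable def fokkerPlanck {d : ℕ}
    (r : (Fin d → ℝ) → (Fin d → ℝ)) (D : (Fin d → ℝ) → Matrix (Fin d) (Fin d) ℝ)
    (ν : Measure (Fin d → ℝ)) (p : (Fin d → ℝ) → ℝ) (x : Fin d → ℝ) : ℝ :=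
  -(∑ i : Fin d, fderiv ℝ (fun x => r x i * p x) x (Pi.single i 1))
    + (1/2 : ℝ) * ∑ i : Fin d, ∑ j : Fin d,
        fderiv ℝ (fun x => fderiv ℝ (fun x => D x i j * p x) x (Pi.single j 1)) x
          (Pi.single i 1)
    + ∫ y, (p (x + y) - p x) ∂ν

/-- The formal `L²`-adjoint (generator)
`(L*ψ)(x) = r(x)⬝∇ψ(x) + (1/2) Σᵢⱼ Dᵢⱼ(x) ∂ᵢ∂ⱼψ(x) + ∫ [ψ(x+y) − ψ(x)] ν(dy)`. -/
noncomputable def fokkerPlanckAdj {d : ℕ}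
    (r : (Fin d → ℝ) → (Fin d → ℝ)) (D : (Fin d → ℝ) → Matrix (Fin d) (Fin d) ℝ)
    (ν : Measure (Fin d → ℝ)) (ψ : (Fin d → ℝ) → ℝ) (x : Fin d → ℝ) : ℝ :=
  (∑ i : Fin d, r x i * fderiv ℝ ψ x (Pi.single i 1))
    + (1/2 : ℝ) * ∑ i : Fin d, ∑ j : Fin d,
        D x i j * fderiv ℝ (fun x => fderiv ℝ ψ x (Pi.single j 1)) x (Pi.single i 1)
    + ∫ y, (ψ (x + y) - ψ x) ∂ν

/-- Integration by parts with no boundary term, because one factor has compact support. -/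
lemma integral_mul_fderiv_of_hasCompactSupport {d : ℕ} {f g : (Fin d → ℝ) → ℝ}
    (hf : ContDiff ℝ 1 f) (hfc : HasCompactSupport f) (hg : ContDiff ℝ 1 g) (v : Fin d → ℝ) :
    ∫ x, f x * fderiv ℝ g x v = - ∫ x, fderiv ℝ f x v * g x := by
  have hf' : Continuous fun x => fderiv ℝ f x v :=
    (hf.continuous_fderiv one_ne_zero).clm_apply continuous_const
  have hg' : Continuous fun x => fderiv ℝ g x v :=
    (hg.continuous_fderiv one_ne_zero).clm_apply continuous_const
  exact integral_mul_fderiv_eq_neg_fderiv_mul_of_integrable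
    ((hf'.mul hg.continuous).integrable_of_hasCompactSupport (hfc.fderiv_apply ℝ v).mul_right)
    ((hf.continuous.mul hg').integrable_of_hasCompactSupport hfc.mul_right)
    ((hf.continuous.mul hg.continuous).integrable_of_hasCompactSupport hfc.mul_right)
    (fun x _ => hf.differentiable one_ne_zero x) (fun x _ => hg.differentiable one_ne_zero x)

lemma contDiff_fderiv_apply_const {d : ℕ} {f : (Fin d → ℝ) → ℝ} (hf : ContDiff ℝ 2 f)
    (v : Fin d → ℝ) : ContDiff ℝ 1 fun x => fderiv ℝ f x v :=
  (hf.fderiv_right (m := 1) (by norm_num)).clm_apply contDiff_const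

/-- Schwarz's theorem, for iterated directional derivatives. -/
lemma fderiv_fderiv_apply_comm {d : ℕ} {f : (Fin d → ℝ) → ℝ} (hf : ContDiff ℝ 2 f)
    (v w x : Fin d → ℝ) :
    fderiv ℝ (fun x => fderiv ℝ f x v) x w = fderiv ℝ (fun x => fderiv ℝ f x w) x v := by
  have hd : DifferentiableAt ℝ (fderiv ℝ f) x :=
    (hf.fderiv_right (m := 1) (by norm_num)).differentiable one_ne_zero x
  have hs : IsSymmSndFDerivAt ℝ f x := hf.contDiffAt.isSymmSndFDerivAt (by simp)
  rw [fderiv_clm_apply hd (differentiableAt_const v),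
    fderiv_clm_apply hd (differentiableAt_const w)]
  simpa using hs.eq w v

/-- Integrating by parts twice moves a second-order operator onto the compactly supported factor. -/
lemma integral_mul_fderiv_fderiv {d : ℕ} {f g : (Fin d → ℝ) → ℝ}
    (hf : ContDiff ℝ 2 f) (hfc : HasCompactSupport f) (hg : ContDiff ℝ 2 g) (v w : Fin d → ℝ) :
    ∫ x, f x * fderiv ℝ (fun x => fderiv ℝ g x v) x w
      = ∫ x, fderiv ℝ (fun x => fderiv ℝ f x v) x w * g x := by
  rw [integral_mul_fderiv_of_hasCompactSupport (hf.of_le one_le_two) hfc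
      (contDiff_fderiv_apply_const hg v) w,
    integral_mul_fderiv_of_hasCompactSupport (contDiff_fderiv_apply_const hf w)
      (hfc.fderiv_apply ℝ w) (hg.of_le one_le_two) v, neg_neg]
  simp_rw [fderiv_fderiv_apply_comm hf v w]

/-- The shift `ψ(x) p(x + y) ↔ p(x) ψ(x + y)` under Lebesgue measure times a symmetric measure:
the substitution `x ↦ x - y` followed by `y ↦ -y`. -/
lemma integral_prod_shift_comm {d : ℕ} {ν : Measure (Fin d → ℝ)} [SigmaFinite ν]
    [ν.IsNegInvariant] {p ψ : (Fin d → ℝ) → ℝ}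
    (h1 : Integrable (fun q : (Fin d → ℝ) × (Fin d → ℝ) => ψ q.1 * p (q.1 + q.2))
      (volume.prod ν))
    (h3 : Integrable (fun q : (Fin d → ℝ) × (Fin d → ℝ) => p q.1 * ψ (q.1 + q.2))
      (volume.prod ν)) :
    ∫ q, ψ q.1 * p (q.1 + q.2) ∂(volume.prod ν) = ∫ q, p q.1 * ψ (q.1 + q.2) ∂(volume.prod ν) := by
  rw [integral_prod_symm _ h1, integral_prod_symm _ h3,
    ← integral_neg_eq_self (fun y => ∫ x, ψ x * p (x + y)) ν]
  refine integral_congr_ae (.of_forall fun y => ?_)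
  dsimp only
  rw [← integral_add_right_eq_self (fun x => ψ x * p (x + -y)) y]
  simp [mul_comm]

/-- The pairing of `f` with the jump part of the generator applied to `g`, as a difference of
double integrals. The scalar `f x` passes through the inner integral even where that integral
diverges and takes the junk value `0`, so integrability of the products is enough. -/
lemma integral_mul_jump {d : ℕ} {ν : Measure (Fin d → ℝ)} [SigmaFinite ν]
    {f g : (Fin d → ℝ) → ℝ}
    (h : Integrable (fun q : (Fin d → ℝ) × (Fin d → ℝ) => f q.1 * g (q.1 + q.2))
      (volume.prod ν))
    (h' : Integrable (fun q : (Fin d → ℝ) × (Fin d → ℝ) => f q.1 * g q.1) (volume.prod ν)) :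
    Integrable (fun x => f x * ∫ y, (g (x + y) - g x) ∂ν) ∧
    ∫ x, f x * ∫ y, (g (x + y) - g x) ∂ν
      = ∫ q, f q.1 * g (q.1 + q.2) ∂(volume.prod ν) - ∫ q, f q.1 * g q.1 ∂(volume.prod ν) := by
  simp_rw [← integral_const_mul, mul_sub]
  refine ⟨(h.sub h').integral_prod_left, ?_⟩
  rw [← integral_sub h h']
  exact (integral_prod _ (h.sub h')).symm

/-- `L*` is the adjoint of the Fokker–Planck operator `L` with respect to the
`L²(Lebesgue)` pairing. -/
theorem fokkerPlanck_adjoint {d : ℕ}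
    (r : (Fin d → ℝ) → (Fin d → ℝ)) (hr : ContDiff ℝ 1 r)
    (D : (Fin d → ℝ) → Matrix (Fin d) (Fin d) ℝ)
    (hD : ∀ i j, ContDiff ℝ 2 (fun x => D x i j))
    (ν : Measure (Fin d → ℝ)) [SigmaFinite ν]
    (hν0 : ν {0} = 0)
    (hν_symm : ∀ B : Set (Fin d → ℝ), MeasurableSet B → ν ((fun y => -y) ⁻¹' B) = ν B)
    (p : (Fin d → ℝ) → ℝ) (hp : ContDiff ℝ 2 p)
    (ψ : (Fin d → ℝ) → ℝ) (hψ : ContDiff ℝ 2 ψ) (hψc : HasCompactSupport ψ)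
    (h1 : Integrable (fun q : (Fin d → ℝ) × (Fin d → ℝ) => ψ q.1 * p (q.1 + q.2))
      (volume.prod ν))
    (h2 : Integrable (fun q : (Fin d → ℝ) × (Fin d → ℝ) => ψ q.1 * p q.1)
      (volume.prod ν))
    (h3 : Integrable (fun q : (Fin d → ℝ) × (Fin d → ℝ) => p q.1 * ψ (q.1 + q.2))
      (volume.prod ν))
    (h4 : Integrable (fun x => ψ x * fokkerPlanck r D ν p x) volume)
    (h5 : Integrable (fun x => p x * fokkerPlanckAdj r D ν ψ x) volume) :
    ∫ x, ψ x * fokkerPlanck r D ν p x ∂volume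
      = ∫ x, p x * fokkerPlanckAdj r D ν ψ x ∂volume := by
  have : ν.IsNegInvariant := ⟨by
    ext B hB
    rw [Measure.neg_def, Measure.map_apply measurable_neg hB]
    exact hν_symm B hB⟩
  have hri (i : Fin d) : ContDiff ℝ 1 fun x => r x i * p x :=
    (contDiff_pi.mp hr i).mul (hp.of_le one_le_two)
  have hDp (i j : Fin d) : ContDiff ℝ 2 fun x => D x i j * p x := (hD i j).mul hp
  have hint {f g : (Fin d → ℝ) → ℝ} (hf : Continuous f) (hfc : HasCompactSupport f)
      (hg : Continuous g) : Integrable fun x => f x * g x :=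
    (hf.mul hg).integrable_of_hasCompactSupport hfc.mul_right
  have hcont {f : (Fin d → ℝ) → ℝ} (hf : ContDiff ℝ 1 f) (v : Fin d → ℝ) :
      Continuous fun x => fderiv ℝ f x v :=
    (hf.continuous_fderiv one_ne_zero).clm_apply continuous_const
  obtain ⟨hJ, hJe⟩ := integral_mul_jump h1 h2
  obtain ⟨hJ', hJe'⟩ := integral_mul_jump h3 (by simpa only [mul_comm] using h2)
  have hA (i : Fin d) := hint hψ.continuous hψc (hcont (hri i) (Pi.single i 1))
  have hB (i j : Fin d) := hint hψ.continuous hψc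
    (hcont (contDiff_fderiv_apply_const (hDp i j) (Pi.single j 1)) (Pi.single i 1))
  have hA' (i : Fin d) := hint (hcont (hψ.of_le one_le_two) (Pi.single i 1))
    (hψc.fderiv_apply ℝ (Pi.single i 1)) (hri i).continuous
  have hB' (i j : Fin d) := hint
    (hcont (contDiff_fderiv_apply_const hψ (Pi.single j 1)) (Pi.single i 1))
    ((hψc.fderiv_apply ℝ (Pi.single j 1)).fderiv_apply ℝ (Pi.single i 1)) (hDp i j).continuous
  have hL : ∀ x, ψ x * fokkerPlanck r D ν p x =
      -(∑ i : Fin d, ψ x * fderiv ℝ (fun x => r x i * p x) x (Pi.single i 1))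
      + (1/2 : ℝ) * ∑ i : Fin d, ∑ j : Fin d, ψ x *
          fderiv ℝ (fun x => fderiv ℝ (fun x => D x i j * p x) x (Pi.single j 1)) x
            (Pi.single i 1)
      + ψ x * ∫ y, (p (x + y) - p x) ∂ν := fun x => by
    simp only [fokkerPlanck, ← Finset.mul_sum]
    ring
  have hR : ∀ x, p x * fokkerPlanckAdj r D ν ψ x =
      (∑ i : Fin d, fderiv ℝ ψ x (Pi.single i 1) * (r x i * p x))
      + (1/2 : ℝ) * ∑ i : Fin d, ∑ j : Fin d,
          fderiv ℝ (fun x => fderiv ℝ ψ x (Pi.single j 1)) x (Pi.single i 1) * (D x i j * p x)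
      + p x * ∫ y, (ψ (x + y) - ψ x) ∂ν := fun x => by
    simp only [fokkerPlanckAdj, mul_add, Finset.mul_sum]
    congr! 2
    · refine Finset.sum_congr rfl fun i _ => by ring
    · refine Finset.sum_congr rfl fun i _ => Finset.sum_congr rfl fun j _ => by ring
  have hAs := integrable_finsetSum Finset.univ fun i _ => hA i
  have hAs' := integrable_finsetSum Finset.univ fun i _ => hA' i
  have hBs (i : Fin d) := integrable_finsetSum Finset.univ fun j _ => hB i j
  have hBs' (i : Fin d) := integrable_finsetSum Finset.univ fun j _ => hB' i j
  have hBss := (integrable_finsetSum Finset.univ fun i _ => hBs i).const_mul (1/2 : ℝ)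
  have hBss' := (integrable_finsetSum Finset.univ fun i _ => hBs' i).const_mul (1/2 : ℝ)
  simp_rw [hL, hR]
  rw [integral_add (hAs.fun_neg.fun_add hBss) hJ, integral_add hAs.fun_neg hBss,
    integral_add (hAs'.fun_add hBss') hJ', integral_add hAs' hBss', hJe, hJe',
    integral_prod_shift_comm h1 h3, integral_neg, integral_const_mul, integral_const_mul,
    integral_finsetSum _ fun i _ => hA i, integral_finsetSum _ fun i _ => hA' i,
    integral_finsetSum _ fun i _ => hBs i, integral_finsetSum _ fun i _ => hBs' i,
    ← Finset.sum_neg_distrib]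
  congr 1
  · congr 1
    · refine Finset.sum_congr rfl fun i _ => ?_
      rw [integral_mul_fderiv_of_hasCompactSupport (hψ.of_le one_le_two) hψc (hri i), neg_neg]
    · congr 1
      refine Finset.sum_congr rfl fun i _ => ?_
      rw [integral_finsetSum _ fun j _ => hB i j, integral_finsetSum _ fun j _ => hB' i j]
      exact Finset.sum_congr rfl fun j _ => integral_mul_fderiv_fderiv hψ hψc (hDp i j) _ _
  · simp only [mul_comm]
end
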